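/- Let ρ be a full-rank density operator on H = H_1 ⊗ … ⊗ H_n and N = {N_j} a neighborhood structure. If span(ρ) = ∩_j [F_{ρ_{N_j}}(Σ_{N_j}(ρ)) ⊗ B(H_{N̄_j})], then ρ is FFQLS relative to N; moreover, a stabilizing QL FF generator can be chosen whose neighborhood components are purely dissipative (zero Hamiltonian in some Lindblad representation). -/

import Mathlib

namespace QDS

open Matrix
open scoped ComplexOrder

/-! ### Basic single-system notions -/

section Single

variable {ι : Type*} [Fintype ι] [DecidableEq ι]

open Classical in
/-- The (unique) positive-semidefinite square root of a positive-semidefinite matrix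
(junk value `0` if no positive-semidefinite square root exists). -/
noncomputable def msqrt (A : Matrix ι ι ℂ) : Matrix ι ι ℂ :=
  if h : ∃ B : Matrix ι ι ℂ, B.PosSemidef ∧ B * B = A then h.choose else 0

open Classical in
/-- The Moore–Penrose pseudoinverse of a matrix, defined via its characterizing
properties (it always exists and is unique for complex matrices). -/
noncomputable def mpinv (A : Matrix ι ι ℂ) : Matrix ι ι ℂ :=
  if h : ∃ B : Matrix ι ι ℂ,
      A * B * A = A ∧ B * A * B = B ∧ (A * B)ᴴ = A * B ∧ (B * A)ᴴ = B * A
  then h.choose else 0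

/-- A density operator: positive semidefinite with unit trace. -/
def IsDensity (ρ : Matrix ι ι ℂ) : Prop := ρ.PosSemidef ∧ ρ.trace = 1

/-- A CPTP map in Kraus (operator-sum) form. -/
def IsCPTP (T : Matrix ι ι ℂ →ₗ[ℂ] Matrix ι ι ℂ) : Prop :=
  ∃ (m : ℕ) (M : Fin m → Matrix ι ι ℂ),
    (∀ X, T X = ∑ k, M k * X * (M k)ᴴ) ∧ (∑ k, (M k)ᴴ * M k) = 1

/-- The Lindblad (QDS) generator with Hamiltonian `Hm` and noise operators `Lk`:
`L(X) = -i[Hm, X] + Σₖ (Lₖ X Lₖ† - ½{Lₖ†Lₖ, X})`. -/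
noncomputable def lindbladMap (Hm : Matrix ι ι ℂ) {m : ℕ} (Lk : Fin m → Matrix ι ι ℂ) :
    Matrix ι ι ℂ →ₗ[ℂ] Matrix ι ι ℂ :=
  (-Complex.I) • (LinearMap.mulLeft ℂ Hm - LinearMap.mulRight ℂ Hm) +
    ∑ k, ((LinearMap.mulRight ℂ (Lk k)ᴴ).comp (LinearMap.mulLeft ℂ (Lk k)) -
      ((1 : ℂ)/2) • (LinearMap.mulLeft ℂ ((Lk k)ᴴ * Lk k) +
        LinearMap.mulRight ℂ ((Lk k)ᴴ * Lk k)))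

/-- `L` is a QDS (Lindblad) generator. -/
def IsLindblad (L : Matrix ι ι ℂ →ₗ[ℂ] Matrix ι ι ℂ) : Prop :=
  ∃ Hm : Matrix ι ι ℂ, Hm.IsHermitian ∧
    ∃ (m : ℕ) (Lk : Fin m → Matrix ι ι ℂ), L = lindbladMap Hm Lk

/-- `Ld` is the Hilbert–Schmidt adjoint of `L` (w.r.t. `⟨X,Y⟩ = Tr(X†Y)`). -/
def IsHSAdjoint (L Ld : Matrix ι ι ℂ →ₗ[ℂ] Matrix ι ι ℂ) : Prop :=
  ∀ X Y : Matrix ι ι ℂ, ((Ld X)ᴴ * Y).trace = (Xᴴ * L Y).trace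

/-- The fixed-point set of a (super)operator. -/
def fixSet (T : Matrix ι ι ℂ →ₗ[ℂ] Matrix ι ι ℂ) : Set (Matrix ι ι ℂ) := {X | T X = X}

/-- The support of an operator: the orthogonal complement of its kernel,
equivalently the range of its adjoint. -/
noncomputable def msupp (A : Matrix ι ι ℂ) : Submodule ℂ (ι → ℂ) := LinearMap.range (Aᴴ).mulVecLin

/-- The support of a set of operators: the span of the union of their supports. -/
noncomputable def suppSet (W : Set (Matrix ι ι ℂ)) : Submodule ℂ (ι → ℂ) := ⨆ O ∈ W, msupp O

/-- The minimal modular-invariant distorted algebra generated by `W` relative to `ρ`: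
the smallest subspace containing `W` that is closed under the adjoint, under the
`ρ`-modified product `(X,Y) ↦ X ρ⁻ Y`, and under the modular map `X ↦ ρ^{1/2} X ρ⁻^{1/2}`. -/
noncomputable def Fdist (ρ : Matrix ι ι ℂ) (W : Set (Matrix ι ι ℂ)) :
    Submodule ℂ (Matrix ι ι ℂ) :=
  sInf {S : Submodule ℂ (Matrix ι ι ℂ) | W ⊆ S ∧ (∀ X ∈ S, Xᴴ ∈ S) ∧
    (∀ X ∈ S, ∀ Y ∈ S, X * mpinv ρ * Y ∈ S) ∧
    (∀ X ∈ S, msqrt ρ * X * mpinv (msqrt ρ) ∈ S)}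

/-- `ρ` is globally asymptotically stable for the generator `L`: it is invariant and every
solution of `ẋ = L(x)` starting at a density operator converges to `ρ` as `t → ∞`. -/
def IsGAS (L : Matrix ι ι ℂ →ₗ[ℂ] Matrix ι ι ℂ) (ρ : Matrix ι ι ℂ) : Prop :=
  L ρ = 0 ∧
  ∀ σ : Matrix ι ι ℂ, IsDensity σ →
    ∀ x : ℝ → Matrix ι ι ℂ, x 0 = σ →
      (∀ t : ℝ, ∀ i j, HasDerivAt (fun s : ℝ => x s i j) (L (x t) i j) t) →
      ∀ i j, Filter.Tendsto (fun t : ℝ => x t i j) Filter.atTop (nhds (ρ i j))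

end Single

/-! ### Bipartite notions -/

section Bipartite

variable {α β : Type*} [Fintype α] [Fintype β] [DecidableEq α] [DecidableEq β]

/-- Partial trace over the second factor. -/
noncomputable def ptraceB (ρ : Matrix (α × β) (α × β) ℂ) : Matrix α α ℂ :=
  Matrix.of fun i j => ∑ k : β, ρ (i, k) (j, k)

/-- The operator Schmidt span of `ρ` on the first factor:
`{Tr_B[(I ⊗ B) ρ] : B ∈ B(H_B)}`. -/
noncomputable def opSchmidtA (ρ : Matrix (α × β) (α × β) ℂ) : Set (Matrix α α ℂ) :=
  {A | ∃ B : Matrix β β ℂ,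
    A = ptraceB ((Matrix.kroneckerMap (· * ·) (1 : Matrix α α ℂ) B) * ρ)}

/-- The (vector) Schmidt span of `v ∈ V_A ⊗ V_B` relative to `V_A`: the image of `v`
under partial inner products with vectors of `V_B`. -/
def vSchmidtA (v : α × β → ℂ) : Set (α → ℂ) :=
  {w | ∃ b : β → ℂ, w = fun a => ∑ j, (starRingEnd ℂ) (b j) * v (a, j)}

/-- `Σ_A(v) ⊗ V_B` as a subspace of `V_A ⊗ V_B`. -/
noncomputable def extVSchmidtA (v : α × β → ℂ) : Submodule ℂ (α × β → ℂ) :=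
  Submodule.span ℂ {v' | ∃ w ∈ vSchmidtA v, ∃ b : β → ℂ, v' = fun p => w p.1 * b p.2}

end Bipartite

/-! ### Multipartite notions -/

section Multipartite

variable {n : ℕ} {d : Fin n → Type*} [∀ a, Fintype (d a)] [∀ a, DecidableEq (d a)]

/-- Index type of the neighborhood factor `H_N`. -/
abbrev nbhdIdx (d : Fin n → Type*) (N : Finset (Fin n)) : Type _ :=
  ∀ a : {x : Fin n // x ∈ N}, d a

/-- Index type of the complementary factor `H_N̄`. -/
abbrev nbhdCoIdx (d : Fin n → Type*) (N : Finset (Fin n)) : Type _ :=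
  ∀ a : {x : Fin n // ¬ x ∈ N}, d a

/-- The factorization `H ≃ H_N ⊗ H_N̄` at the level of index types. -/
def splitEquiv (d : Fin n → Type*) (N : Finset (Fin n)) :
    (∀ a, d a) ≃ nbhdIdx d N × nbhdCoIdx d N :=
  Equiv.piEquivPiSubtypeProd (fun x => x ∈ N) d

variable (d)

/-- The operator `A ⊗ B` on `H = H_N ⊗ H_N̄`, viewed as an operator on `H`. -/
noncomputable def splitLift (N : Finset (Fin n))
    (A : Matrix (nbhdIdx d N) (nbhdIdx d N) ℂ)
    (B : Matrix (nbhdCoIdx d N) (nbhdCoIdx d N) ℂ) :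
    Matrix (∀ a, d a) (∀ a, d a) ℂ :=
  (Matrix.kroneckerMap (· * ·) A B).submatrix (splitEquiv d N) (splitEquiv d N)

/-- The neighborhood operator `A ⊗ I_N̄` on `H`. -/
noncomputable def nbhdLift (N : Finset (Fin n))
    (A : Matrix (nbhdIdx d N) (nbhdIdx d N) ℂ) : Matrix (∀ a, d a) (∀ a, d a) ℂ :=
  splitLift d N A 1

/-- The operator `I_N ⊗ B` on `H`. -/
noncomputable def coLift (N : Finset (Fin n))
    (B : Matrix (nbhdCoIdx d N) (nbhdCoIdx d N) ℂ) : Matrix (∀ a, d a) (∀ a, d a) ℂ :=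
  splitLift d N 1 B

/-- The reduced state `ρ_N = Tr_N̄(ρ)` on the neighborhood `N`. -/
noncomputable def nbhdPtrace (N : Finset (Fin n)) (ρ : Matrix (∀ a, d a) (∀ a, d a) ℂ) :
    Matrix (nbhdIdx d N) (nbhdIdx d N) ℂ :=
  Matrix.of fun i j => ∑ k : nbhdCoIdx d N,
    ρ ((splitEquiv d N).symm (i, k)) ((splitEquiv d N).symm (j, k))

/-- The operator Schmidt span of `ρ` on the neighborhood `N`:
`Σ_N(ρ) = {Tr_N̄[(I_N ⊗ B) ρ] : B}`. -/
noncomputable def nbhdSchmidt (N : Finset (Fin n)) (ρ : Matrix (∀ a, d a) (∀ a, d a) ℂ) :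
    Set (Matrix (nbhdIdx d N) (nbhdIdx d N) ℂ) :=
  {A | ∃ B : Matrix (nbhdCoIdx d N) (nbhdCoIdx d N) ℂ,
    A = nbhdPtrace d N (coLift d N B * ρ)}

/-- The extended minimal modular-invariant distorted algebra
`F_{ρ_N}(Σ_N(ρ)) ⊗ B(H_N̄)` as a subspace of `B(H)`. -/
noncomputable def extF (N : Finset (Fin n)) (ρ : Matrix (∀ a, d a) (∀ a, d a) ℂ) :
    Submodule ℂ (Matrix (∀ a, d a) (∀ a, d a) ℂ) :=
  Submodule.span ℂ {X | ∃ A ∈ Fdist (nbhdPtrace d N ρ) (nbhdSchmidt d N ρ),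
    ∃ B : Matrix (nbhdCoIdx d N) (nbhdCoIdx d N) ℂ, X = splitLift d N A B}

/-- A neighborhood QDS generator for `N`: a Lindblad generator whose Hamiltonian and
noise operators all act as `X_N ⊗ I_N̄`. -/
def IsNbhdGen (N : Finset (Fin n))
    (L : Matrix (∀ a, d a) (∀ a, d a) ℂ →ₗ[ℂ] Matrix (∀ a, d a) (∀ a, d a) ℂ) : Prop :=
  ∃ HN : Matrix (nbhdIdx d N) (nbhdIdx d N) ℂ, HN.IsHermitian ∧
    ∃ (m : ℕ) (Lk : Fin m → Matrix (nbhdIdx d N) (nbhdIdx d N) ℂ),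
      L = lindbladMap (nbhdLift d N HN) fun k => nbhdLift d N (Lk k)

/-- A purely dissipative neighborhood generator for `N` (zero Hamiltonian in some
Lindblad representation). -/
def IsDissipNbhdGen (N : Finset (Fin n))
    (L : Matrix (∀ a, d a) (∀ a, d a) ℂ →ₗ[ℂ] Matrix (∀ a, d a) (∀ a, d a) ℂ) : Prop :=
  ∃ (m : ℕ) (Lk : Fin m → Matrix (nbhdIdx d N) (nbhdIdx d N) ℂ),
    L = lindbladMap 0 fun k => nbhdLift d N (Lk k)

/-- The family of neighborhood generators `Lj` is frustration free: every invariant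
state of the sum is invariant for each component. -/
def IsFFFamily {M : ℕ}
    (Lj : Fin M → (Matrix (∀ a, d a) (∀ a, d a) ℂ →ₗ[ℂ] Matrix (∀ a, d a) (∀ a, d a) ℂ)) :
    Prop :=
  ∀ ρ : Matrix (∀ a, d a) (∀ a, d a) ℂ, IsDensity ρ → (∑ j, Lj j) ρ = 0 → ∀ j, Lj j ρ = 0

/-- `ρ` is frustration-free quasi-locally stabilizable relative to the neighborhood
structure `Nb`. -/
def IsFFQLS {M : ℕ} (Nb : Fin M → Finset (Fin n))
    (ρ : Matrix (∀ a, d a) (∀ a, d a) ℂ) : Prop :=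
  ∃ Lj : Fin M → (Matrix (∀ a, d a) (∀ a, d a) ℂ →ₗ[ℂ] Matrix (∀ a, d a) (∀ a, d a) ℂ),
    (∀ j, IsNbhdGen d (Nb j) (Lj j)) ∧ IsFFFamily d Lj ∧ IsGAS (∑ j, Lj j) ρ

/-- A pure state `|ψ⟩⟨ψ|` is dissipatively quasi-locally stabilizable relative to `Nb`:
it is GAS for a QL generator whose components have zero Hamiltonian and neighborhood
noise operators annihilating `ψ`. -/
def IsDQLS {M : ℕ} (Nb : Fin M → Finset (Fin n)) (ψ : (∀ a, d a) → ℂ) : Prop :=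
  ∃ Lj : Fin M → (Matrix (∀ a, d a) (∀ a, d a) ℂ →ₗ[ℂ] Matrix (∀ a, d a) (∀ a, d a) ℂ),
    (∀ j, ∃ (m : ℕ) (Dk : Fin m → Matrix (nbhdIdx d (Nb j)) (nbhdIdx d (Nb j)) ℂ),
      Lj j = lindbladMap 0 (fun k => nbhdLift d (Nb j) (Dk k)) ∧
      ∀ k, (nbhdLift d (Nb j) (Dk k)).mulVec ψ = 0) ∧
    IsGAS (∑ j, Lj j) (Matrix.vecMulVec ψ (star ψ))

/-- The (vector) Schmidt span of `ψ` relative to the neighborhood factor `H_N`. -/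
def vecSchmidt (N : Finset (Fin n)) (ψ : (∀ a, d a) → ℂ) : Set (nbhdIdx d N → ℂ) :=
  {w | ∃ b : nbhdCoIdx d N → ℂ,
    w = fun i => ∑ k, (starRingEnd ℂ) (b k) * ψ ((splitEquiv d N).symm (i, k))}

/-- `Σ_N(ψ) ⊗ H_N̄` as a subspace of `H`. -/
noncomputable def extVecSchmidt (N : Finset (Fin n)) (ψ : (∀ a, d a) → ℂ) :
    Submodule ℂ ((∀ a, d a) → ℂ) :=
  Submodule.span ℂ {v | ∃ w ∈ vecSchmidt d N ψ, ∃ b : nbhdCoIdx d N → ℂ,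
    v = fun x => w ((splitEquiv d N) x).1 * b ((splitEquiv d N) x).2}

end Multipartite



section Aux
variable {ι : Type*} [Fintype ι] [DecidableEq ι]

lemma posDef_mul_inv {τ : Matrix ι ι ℂ} (h : τ.PosDef) : τ * τ⁻¹ = 1 :=
  Matrix.mul_nonsing_inv _ ((Matrix.isUnit_iff_isUnit_det _).1 h.isUnit)

lemma posDef_inv_mul {τ : Matrix ι ι ℂ} (h : τ.PosDef) : τ⁻¹ * τ = 1 :=
  Matrix.nonsing_inv_mul _ ((Matrix.isUnit_iff_isUnit_det _).1 h.isUnit)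

lemma mpinv_of_inv {A B : Matrix ι ι ℂ} (h1 : A * B = 1) (h2 : B * A = 1) : mpinv A = B := by
  have hex : ∃ B : Matrix ι ι ℂ,
      A * B * A = A ∧ B * A * B = B ∧ (A * B)ᴴ = A * B ∧ (B * A)ᴴ = B * A :=
    ⟨B, by simp [h1], by simp [h2], by simp [h1], by simp [h2]⟩
  unfold mpinv
  rw [dif_pos hex]
  have h := hex.choose_spec.1
  generalize hex.choose = C at h
  calc C = (B * A) * C * (A * B) := by simp [h1, h2]
    _ = B * (A * C * A) * B := by simp only [Matrix.mul_assoc]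
    _ = B := by rw [h, h2, one_mul]

lemma mpinv_posDef {τ : Matrix ι ι ℂ} (h : τ.PosDef) : mpinv τ = τ⁻¹ :=
  mpinv_of_inv (posDef_mul_inv h) (posDef_inv_mul h)

open scoped MatrixOrder in
lemma exists_msqrt {τ : Matrix ι ι ℂ} (h : τ.PosSemidef) :
    ∃ B : Matrix ι ι ℂ, B.PosSemidef ∧ B * B = τ :=
  ⟨CFC.sqrt τ, (CFC.sqrt_nonneg τ).posSemidef, CFC.sqrt_mul_sqrt_self τ h.nonneg⟩

lemma msqrt_mul {τ : Matrix ι ι ℂ} (h : τ.PosSemidef) : msqrt τ * msqrt τ = τ := by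
  unfold msqrt
  rw [dif_pos (exists_msqrt h)]
  exact (exists_msqrt h).choose_spec.2

lemma modular_twice {τ : Matrix ι ι ℂ} (h : τ.PosDef) (X : Matrix ι ι ℂ) :
    msqrt τ * (msqrt τ * X * mpinv (msqrt τ)) * mpinv (msqrt τ) = τ * X * τ⁻¹ := by
  set r := msqrt τ with hr
  have hrr : r * r = τ := msqrt_mul h.posSemidef
  have h1 : r * (r * τ⁻¹) = 1 := by rw [← Matrix.mul_assoc, hrr, posDef_mul_inv h]
  have h2 : (r * τ⁻¹) * r = 1 := mul_eq_one_comm.1 h1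
  rw [mpinv_of_inv h1 h2]
  have h3 : (r * τ⁻¹) * (r * τ⁻¹) = τ⁻¹ := by
    rw [← Matrix.mul_assoc, h2, one_mul]
  calc r * (r * X * (r * τ⁻¹)) * (r * τ⁻¹) = (r * r) * X * ((r * τ⁻¹) * (r * τ⁻¹)) := by
        simp only [Matrix.mul_assoc]
    _ = _ := by rw [hrr, h3]

/-- positive definite weighted norm -/
lemma trace_pd_nonneg {ρ : Matrix ι ι ℂ} (h : ρ.PosDef) (W : Matrix ι ι ℂ) :
    0 ≤ (Wᴴ * ρ * W).trace.re := by
  have := (h.posSemidef.conjTranspose_mul_mul_same W).trace_nonneg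
  exact (Complex.nonneg_iff.1 this).1

lemma trace_pd_eq_zero {ρ : Matrix ι ι ℂ} (h : ρ.PosDef) (W : Matrix ι ι ℂ)
    (h0 : (Wᴴ * ρ * W).trace.re ≤ 0) : W = 0 := by
  have hp := h.posSemidef.conjTranspose_mul_mul_same W
  have h1 := Complex.nonneg_iff.1 hp.trace_nonneg
  have h2 : (Wᴴ * ρ * W).trace = 0 := Complex.ext (le_antisymm h0 h1.1) h1.2.symm
  have h3 := hp.trace_eq_zero_iff.1 h2
  apply Matrix.ext_of_mulVec_single
  intro i
  by_contra hne
  rw [Matrix.zero_mulVec] at hne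
  have h4 := h.dotProduct_mulVec_pos hne
  have : star (W *ᵥ Pi.single i 1) ⬝ᵥ ρ *ᵥ (W *ᵥ Pi.single i 1)
      = star (Pi.single i 1) ⬝ᵥ (Wᴴ * ρ * W) *ᵥ Pi.single i 1 := by
    rw [Matrix.star_mulVec, ← Matrix.dotProduct_mulVec]
    simp only [Matrix.mulVec_mulVec, Matrix.mul_assoc]
  rw [this, h3] at h4
  simp at h4

lemma exists_orthProj {E : Type*} [NormedAddCommGroup E] [InnerProductSpace ℂ E]
    [FiniteDimensional ℂ E] (A : Submodule ℂ E) : ∃ P : E →ₗ[ℂ] E,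
      (∀ y, P y ∈ A) ∧ (∀ y ∈ A, P y = y) ∧
      (∀ y, (∀ a ∈ A, inner ℂ a y = 0) → P y = 0) ∧
      (∀ y, ∀ a ∈ A, inner ℂ a (y - P y) = 0) := by
  refine ⟨(A.starProjection : E →L[ℂ] E), ?_, ?_, ?_, ?_⟩
  · intro y; exact A.starProjection_apply_mem y
  · intro y hy; exact A.starProjection_eq_self_iff.2 hy
  · intro y hy
    refine (Submodule.starProjection_apply_eq_zero_iff A).2 ?_
    rw [Submodule.mem_orthogonal]
    exact hy
  · intro y a ha
    exact (Submodule.mem_orthogonal _ _).1 (A.sub_starProjection_mem_orthogonal y) a ha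

/-- Double commutant theorem (finite-dimensional). -/
lemma bicommutant (A : Submodule ℂ (Matrix ι ι ℂ)) (h1 : (1 : Matrix ι ι ℂ) ∈ A)
    (hm : ∀ a ∈ A, ∀ b ∈ A, a * b ∈ A) (hs : ∀ a ∈ A, aᴴ ∈ A)
    (x : Matrix ι ι ℂ)
    (hx : ∀ c : Matrix ι ι ℂ, (∀ a ∈ A, a * c = c * a) → c * x = x * c) : x ∈ A := by
  obtain ⟨P, hPA, hPid, hPorth, hPorth'⟩ : ∃ P : Matrix ι ι ℂ →ₗ[ℂ] Matrix ι ι ℂ,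
      (∀ y, P y ∈ A) ∧ (∀ y ∈ A, P y = y) ∧
      (∀ y, (∀ a ∈ A, (y * 1 * aᴴ).trace = 0) → P y = 0) ∧
      (∀ y, ∀ a ∈ A, ((y - P y) * 1 * aᴴ).trace = 0) :=
    @exists_orthProj (Matrix ι ι ℂ)
      (Matrix.toMatrixNormedAddCommGroup (1 : Matrix ι ι ℂ) Matrix.PosDef.one)
      (Matrix.toMatrixInnerProductSpace (1 : Matrix ι ι ℂ) Matrix.PosSemidef.one)
      (inferInstanceAs (FiniteDimensional ℂ (Matrix ι ι ℂ))) A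
  simp only [Matrix.mul_one] at hPorth hPorth'
  have hcomm : ∀ a ∈ A, ∀ y, P (a * y) = a * P y := by
    intro a ha y
    have e : a * y = a * P y + a * (y - P y) := by rw [← Matrix.mul_add]; simp
    rw [e, map_add, hPid _ (hm a ha _ (hPA y)), hPorth (a * (y - P y)), add_zero]
    intro b hb
    rw [Matrix.mul_assoc, Matrix.trace_mul_comm, Matrix.mul_assoc,
      show bᴴ * a = (aᴴ * b)ᴴ by simp]
    exact hPorth' y _ (hm _ (hs a ha) _ hb)
  -- blocks
  have hb : ∀ k l : ι, ∃ c : Matrix ι ι ℂ, ∀ v : ι → ℂ,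
      c *ᵥ v = fun i => P (Matrix.vecMulVec v (Pi.single l 1)) i k := by
    intro k l
    let f : (ι → ℂ) →ₗ[ℂ] (ι → ℂ) :=
      { toFun := fun v i => P (Matrix.vecMulVec v (Pi.single l 1)) i k
        map_add' := by intro v w; ext i; simp [Matrix.add_vecMulVec]
        map_smul' := by intro v w; ext i; simp [Matrix.smul_vecMulVec] }
    refine ⟨LinearMap.toMatrix' f, fun v => ?_⟩
    rw [LinearMap.toMatrix'_mulVec]; rfl
  have hmv : ∀ (a : Matrix ι ι ℂ) (v : ι → ℂ) (l : ι), Matrix.vecMulVec (a *ᵥ v) (Pi.single l 1)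
      = a * Matrix.vecMulVec v (Pi.single l (1:ℂ)) := by
    intro a v l
    rw [Matrix.mul_vecMulVec]
  have hcx : ∀ l (v : ι → ℂ), P (x * Matrix.vecMulVec v (Pi.single l 1))
      = x * P (Matrix.vecMulVec v (Pi.single l 1)) := by
    intro l v
    ext i k
    obtain ⟨c, hc⟩ := hb k l
    have h2 := hx c (by
      intro a ha
      apply Matrix.ext_of_mulVec_single
      intro j
      rw [← Matrix.mulVec_mulVec, ← Matrix.mulVec_mulVec, hc, hc, hmv, hcomm a ha]
      rfl)
    have h3 : c *ᵥ (x *ᵥ v) = x *ᵥ (c *ᵥ v) := by simp only [Matrix.mulVec_mulVec, h2]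
    rw [hc, hc, hmv] at h3
    exact congrFun h3 i
  have hone : (1 : Matrix ι ι ℂ) = ∑ l, Matrix.vecMulVec (Pi.single l 1) (Pi.single l (1:ℂ)) := by
    ext i j
    simp [Matrix.sum_apply, Matrix.vecMulVec_apply, Matrix.one_apply, Pi.single_apply]
  have : P x = x := by
    have e : P (x * 1) = x * P 1 := by
      rw [hone, Matrix.mul_sum, map_sum, map_sum, Matrix.mul_sum]
      exact Finset.sum_congr rfl fun l _ => hcx l _
    rwa [hPid 1 h1, Matrix.mul_one] at e
  rw [← this]; exact hPA x

end Aux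


set_option linter.unusedSectionVars false
section Aux2
variable {ι : Type*} [Fintype ι] [DecidableEq ι]

/-- dissipator of one noise operator -/
noncomputable def dis (L X : Matrix ι ι ℂ) : Matrix ι ι ℂ :=
  L * X * Lᴴ - ((1 : ℂ)/2) • (Lᴴ * L * X + X * (Lᴴ * L))

lemma lindblad_zero_apply {m : ℕ} (Lk : Fin m → Matrix ι ι ℂ) (X : Matrix ι ι ℂ) :
    lindbladMap 0 Lk X = ∑ k, dis (Lk k) X := by
  simp [lindbladMap, dis, Matrix.mul_assoc]

lemma trace_dis (L X : Matrix ι ι ℂ) : (dis L X).trace = 0 := by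
  unfold dis
  have h1 : (L * X * Lᴴ).trace = (Lᴴ * L * X).trace := by
    rw [Matrix.trace_mul_comm, Matrix.mul_assoc]
  have h2 : (X * (Lᴴ * L)).trace = (Lᴴ * L * X).trace := Matrix.trace_mul_comm _ _
  simp only [Matrix.trace_sub, Matrix.trace_smul, Matrix.trace_add, h1, h2, smul_eq_mul]
  ring

lemma dis_smul (c : ℂ) (L X : Matrix ι ι ℂ) : dis (c • L) X = (c * star c) • dis L X := by
  unfold dis
  simp only [Matrix.conjTranspose_smul, Matrix.smul_mul, Matrix.mul_smul, smul_smul, smul_sub,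
    smul_add]
  congr 1
  · rw [mul_comm]
  · congr 1 <;> congr 1 <;> ring

/-- The dissipation form of a detailed-balance pair. -/
lemma pair_form {ρ L : Matrix ι ι ℂ} (hρ : ρ.PosDef) {ω : ℝ} (hω : 0 < ω)
    (h : ρ * L = (ω : ℂ) • (L * ρ)) (Z : Matrix ι ι ℂ) :
    (Zᴴ * (dis L (ρ * Z) + (ω⁻¹ : ℂ) • dis Lᴴ (ρ * Z))).trace
      = -((1 : ℂ)/2) * ((ω⁻¹ : ℂ) * ((L * Z - Z * L)ᴴ * ρ * (L * Z - Z * L)).trace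
        + ((Lᴴ * Z - Z * Lᴴ)ᴴ * ρ * (Lᴴ * Z - Z * Lᴴ)).trace) := by
  have hω' : (ω : ℂ) ≠ 0 := by exact_mod_cast hω.ne'
  have hH : ρᴴ = ρ := hρ.isHermitian
  have h1 : L * ρ = (ω⁻¹ : ℂ) • (ρ * L) := by rw [h, smul_smul, inv_mul_cancel₀ hω', one_smul]
  have h2 : Lᴴ * ρ = (ω : ℂ) • (ρ * Lᴴ) := by
    have := congrArg conjTranspose h
    simpa [hH] using this
  have a1 : ∀ Y : Matrix ι ι ℂ, L * (ρ * Y) = (ω⁻¹ : ℂ) • (ρ * (L * Y)) := by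
    intro Y; rw [← Matrix.mul_assoc, h1, Matrix.smul_mul, Matrix.mul_assoc]
  have a2 : ∀ Y : Matrix ι ι ℂ, Lᴴ * (ρ * Y) = (ω : ℂ) • (ρ * (Lᴴ * Y)) := by
    intro Y; rw [← Matrix.mul_assoc, h2, Matrix.smul_mul, Matrix.mul_assoc]
  have c1 : ∀ Y : Matrix ι ι ℂ, (Lᴴ * Y).trace = (Y * Lᴴ).trace :=
    fun Y => Matrix.trace_mul_comm _ _
  have c2 : ∀ Y : Matrix ι ι ℂ, (L * Y).trace = (Y * L).trace :=
    fun Y => Matrix.trace_mul_comm _ _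
  simp only [dis, Matrix.conjTranspose_sub, Matrix.conjTranspose_mul,
    Matrix.conjTranspose_conjTranspose, Matrix.mul_sub, Matrix.sub_mul, Matrix.mul_add,
    Matrix.mul_assoc, Matrix.mul_smul, Matrix.smul_mul, a1, a2, smul_sub, smul_add, smul_smul,
    Matrix.trace_sub, Matrix.trace_add, Matrix.trace_smul, c1, c2, smul_eq_mul]
  field_simp
  ring

lemma pair_zero {ρ L Z : Matrix ι ι ℂ} (hρ : ρ.PosDef) {ω : ℝ} (hω : 0 < ω)
    (h : ρ * L = (ω : ℂ) • (L * ρ)) (hc : L * Z = Z * L) (hc' : Lᴴ * Z = Z * Lᴴ) :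
    dis L (ρ * Z) + (ω⁻¹ : ℂ) • dis Lᴴ (ρ * Z) = 0 := by
  have hω' : (ω : ℂ) ≠ 0 := by exact_mod_cast hω.ne'
  have hH : ρᴴ = ρ := hρ.isHermitian
  have h1 : L * ρ = (ω⁻¹ : ℂ) • (ρ * L) := by rw [h, smul_smul, inv_mul_cancel₀ hω', one_smul]
  have h2 : Lᴴ * ρ = (ω : ℂ) • (ρ * Lᴴ) := by
    have := congrArg conjTranspose h
    simpa [hH] using this
  have a1 : ∀ Y : Matrix ι ι ℂ, L * (ρ * Y) = (ω⁻¹ : ℂ) • (ρ * (L * Y)) := by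
    intro Y; rw [← Matrix.mul_assoc, h1, Matrix.smul_mul, Matrix.mul_assoc]
  have a2 : ∀ Y : Matrix ι ι ℂ, Lᴴ * (ρ * Y) = (ω : ℂ) • (ρ * (Lᴴ * Y)) := by
    intro Y; rw [← Matrix.mul_assoc, h2, Matrix.smul_mul, Matrix.mul_assoc]
  have b1 : ∀ Y : Matrix ι ι ℂ, L * (Z * Y) = Z * (L * Y) := by
    intro Y; rw [← Matrix.mul_assoc, hc, Matrix.mul_assoc]
  have b2 : ∀ Y : Matrix ι ι ℂ, Lᴴ * (Z * Y) = Z * (Lᴴ * Y) := by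
    intro Y; rw [← Matrix.mul_assoc, hc', Matrix.mul_assoc]
  simp only [dis, Matrix.conjTranspose_conjTranspose, Matrix.mul_assoc, Matrix.mul_smul,
    Matrix.smul_mul, a1, a2, b1, b2, hc, hc', smul_sub, smul_add, smul_smul]
  simp only [inv_mul_cancel₀ hω', mul_inv_cancel₀ hω', one_smul, mul_one]
  module

/-- Eigenoperators of the modular map span any invariant subspace. -/
lemma span_eigen {τ : Matrix ι ι ℂ} (hτ : τ.PosDef) (C : Submodule ℂ (Matrix ι ι ℂ))
    (hC : ∀ c ∈ C, τ * c * τ⁻¹ ∈ C) :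
    C ≤ Submodule.span ℂ {L | L ∈ C ∧ ∃ ω : ℝ, 0 < ω ∧ τ * L = (ω : ℂ) • (L * τ)} := by
  let f : Module.End ℂ (Matrix ι ι ℂ) := (LinearMap.mulRight ℂ τ⁻¹).comp (LinearMap.mulLeft ℂ τ)
  have hf : ∀ X, f X = τ * X * τ⁻¹ := fun X => rfl
  have hinv := posDef_inv_mul hτ
  set t := hτ.1.eigenvalues with ht
  have htpos : ∀ i, 0 < t i := hτ.eigenvalues_pos
  set U : Matrix ι ι ℂ := (hτ.1.eigenvectorUnitary : Matrix ι ι ℂ) with hU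
  have hUU : U * star U = 1 := Unitary.coe_mul_star_self _
  have hUU' : star U * U = 1 := Unitary.coe_star_mul_self _
  have hspec : τ = U * diagonal (fun i => (t i : ℂ)) * star U := by
    have := hτ.1.spectral_theorem
    rw [Unitary.conjStarAlgAut_apply] at this
    exact this
  set D : Matrix ι ι ℂ := diagonal (fun i => (t i : ℂ)) with hD
  have hUτ : star U * τ = D * star U := by
    rw [hspec, Matrix.mul_assoc U, ← Matrix.mul_assoc, hUU', one_mul]
  have hτU : τ * U = U * D := by
    rw [hspec, Matrix.mul_assoc, hUU', mul_one]
  have hmem : ∀ (μ : ℂ) X, X ∈ f.eigenspace μ ↔ τ * X = μ • (X * τ) := by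
    intro μ X
    rw [Module.End.mem_eigenspace_iff, hf]
    constructor
    · intro h
      have := congrArg (· * τ) h
      simpa [Matrix.mul_assoc, hinv] using this
    · intro h
      rw [h, Matrix.smul_mul, Matrix.mul_assoc, posDef_mul_inv hτ, mul_one]
  have htop : (⨆ μ : ℂ, f.eigenspace μ) = ⊤ := by
    rw [eq_top_iff]
    intro X _
    have hX : X = ∑ i, ∑ j, U * Matrix.single i j ((star U * X * U) i j) * star U := by
      have := Matrix.matrix_eq_sum_single (star U * X * U)
      calc X = U * (star U * X * U) * star U := by
            simp only [Matrix.mul_assoc, hUU, mul_one]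
            rw [← Matrix.mul_assoc, hUU, one_mul]
        _ = _ := by
            conv_lhs => rw [this]
            simp only [Matrix.mul_sum, Matrix.sum_mul]
    rw [hX]
    refine Submodule.sum_mem _ fun i _ => Submodule.sum_mem _ fun j _ => ?_
    refine Submodule.mem_iSup_of_mem ((t i : ℂ) / t j) ?_
    rw [hmem]
    have htj : (t j : ℂ) ≠ 0 := by exact_mod_cast (htpos j).ne'
    generalize (star U * X * U) i j = x
    have e1 : τ * (U * single i j x * star U) = U * (D * single i j x) * star U := by
      simp only [← Matrix.mul_assoc, hτU]
    have e2 : (U * single i j x * star U) * τ = U * (single i j x * D) * star U := by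
      simp only [Matrix.mul_assoc, hUτ]
    rw [e1, e2, ← Matrix.smul_mul, ← Matrix.mul_smul]
    congr 2
    ext a b
    simp only [hD, Matrix.diagonal_mul, Matrix.mul_diagonal, Matrix.smul_apply, Matrix.single_apply,
      smul_eq_mul]
    split_ifs with hab
    · rw [← hab.1, ← hab.2]; field_simp
    · simp
  have hinf := Submodule.inf_iSup_genEigenspace (f := f) (p := C) (fun x hx => by
    rw [hf]; exact hC x hx) 1
  change C ⊓ (⨆ μ : ℂ, f.eigenspace μ) = ⨆ μ : ℂ, C ⊓ f.eigenspace μ at hinf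
  rw [htop, inf_top_eq] at hinf
  rw [hinf]
  refine iSup_le fun μ => ?_
  rintro L ⟨hLC, hLe⟩
  by_cases hL : L = 0
  · rw [hL]; exact Submodule.zero_mem _
  refine Submodule.subset_span ⟨by rw [← hinf]; exact hLC, ?_⟩
  have hLe' := (hmem _ _).1 hLe
  have hne : star U * L * U ≠ 0 := by
    intro h0
    apply hL
    calc L = U * (star U * L * U) * star U := by
          simp only [Matrix.mul_assoc, hUU, mul_one]
          rw [← Matrix.mul_assoc, hUU, one_mul]
      _ = 0 := by rw [h0]; simp
  obtain ⟨i, j, hij⟩ : ∃ i j, (star U * L * U) i j ≠ 0 := by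
    by_contra! hcon
    exact hne (Matrix.ext hcon)
  have e : D * (star U * L * U) = μ • ((star U * L * U) * D) := by
    calc D * (star U * L * U) = star U * (τ * L) * U := by
          simp only [← Matrix.mul_assoc, hUτ]
      _ = _ := by
          rw [hLe']
          simp only [Matrix.mul_smul, Matrix.smul_mul, Matrix.mul_assoc, hτU]
  have e' := congrFun (congrFun e i) j
  simp only [hD, Matrix.diagonal_mul, Matrix.mul_diagonal, Matrix.smul_apply, smul_eq_mul] at e'
  have htj : (t j : ℂ) ≠ 0 := by exact_mod_cast (htpos j).ne'
  have hμ : μ = ((t i / t j : ℝ) : ℂ) := by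
    push_cast
    rw [eq_div_iff htj]
    apply mul_right_cancel₀ hij
    rw [e']; ring
  exact ⟨t i / t j, div_pos (htpos i) (htpos j), by rw [← hμ]; exact hLe'⟩

/-- The noise operators. -/
lemma exists_noise {τ : Matrix ι ι ℂ} (hτ : τ.PosDef) (S : Submodule ℂ (Matrix ι ι ℂ))
    (hτS : τ ∈ S) (hs : ∀ X ∈ S, Xᴴ ∈ S) (hm : ∀ X ∈ S, ∀ Y ∈ S, X * τ⁻¹ * Y ∈ S)
    (hmod : ∀ X ∈ S, τ * X * τ⁻¹ ∈ S) :
    ∃ (m : ℕ) (L : Fin m → Matrix ι ι ℂ) (ω : Fin m → ℝ), (∀ k, 0 < ω k) ∧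
      (∀ k, ∀ X ∈ S, X * L k = (ω k : ℂ) • (L k * X)) ∧
      (∀ Z : Matrix ι ι ℂ, (∀ k, L k * Z = Z * L k) → ∀ X ∈ S, X * Z ∈ S) := by
  have hi := posDef_inv_mul hτ
  have hi' := posDef_mul_inv hτ
  have hH : τᴴ = τ := hτ.isHermitian
  let A : Submodule ℂ (Matrix ι ι ℂ) := S.comap (LinearMap.mulLeft ℂ τ)
  have hA : ∀ a, a ∈ A ↔ τ * a ∈ S := fun a => Iff.rfl
  have hA1 : (1 : Matrix ι ι ℂ) ∈ A := by rw [hA, mul_one]; exact hτS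
  have hAm : ∀ a ∈ A, ∀ b ∈ A, a * b ∈ A := by
    intro a ha b hb
    rw [hA] at *
    have := hm _ ha _ hb
    rwa [Matrix.mul_assoc (τ * a), ← Matrix.mul_assoc τ⁻¹, hi, one_mul, Matrix.mul_assoc] at this
  have hAs : ∀ a ∈ A, aᴴ ∈ A := by
    intro a ha
    rw [hA] at *
    have := hmod _ (hs _ ha)
    rwa [Matrix.conjTranspose_mul, hH, Matrix.mul_assoc, Matrix.mul_assoc, hi', mul_one] at this
  let C : Submodule ℂ (Matrix ι ι ℂ) :=
    { carrier := {c | ∀ a ∈ A, a * c = c * a}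
      add_mem' := by intro x y hx hy a ha; rw [Matrix.mul_add, hx a ha, hy a ha, Matrix.add_mul]
      zero_mem' := by intro a ha; simp
      smul_mem' := by intro c x hx a ha; rw [Matrix.mul_smul, hx a ha, Matrix.smul_mul] }
  have hC : ∀ c ∈ C, τ * c * τ⁻¹ ∈ C := by
    intro c hc a ha
    have h1 : τ⁻¹ * a * τ ∈ A := by
      rw [hA, ← Matrix.mul_assoc, ← Matrix.mul_assoc, hi', one_mul]
      have := hs _ ((hA _).1 (hAs a ha))
      simpa [hH] using this
    have h2 := hc _ h1
    calc a * (τ * c * τ⁻¹) = τ * ((τ⁻¹ * a * τ) * c) * τ⁻¹ := by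
          simp only [← Matrix.mul_assoc, hi', one_mul]
      _ = τ * (c * (τ⁻¹ * a * τ)) * τ⁻¹ := by rw [h2]
      _ = _ := by simp only [Matrix.mul_assoc, hi', mul_one]
  have hspan := span_eigen hτ C hC
  obtain ⟨b, hbsub, hbspan, hbli⟩ := exists_linearIndependent ℂ
    {L | L ∈ C ∧ ∃ ω : ℝ, 0 < ω ∧ τ * L = (ω : ℂ) • (L * τ)}
  haveI : Finite b := hbli.setFinite
  let e := (Finite.equivFin b).symm
  have hch : ∀ k, ∃ ω : ℝ, 0 < ω ∧ τ * (e k : Matrix ι ι ℂ) = (ω : ℂ) • ((e k : Matrix ι ι ℂ) * τ) :=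
    fun k => (hbsub (e k).2).2
  choose ω hωpos hω using hch
  refine ⟨Nat.card b, fun k => (e k : Matrix ι ι ℂ), ω, hωpos, ?_, ?_⟩
  · intro k X hX
    have hXA : τ⁻¹ * X ∈ A := by rw [hA, ← Matrix.mul_assoc, hi', one_mul]; exact hX
    have h1 := (hbsub (e k).2).1 _ hXA
    have hXe : X = τ * (τ⁻¹ * X) := by rw [← Matrix.mul_assoc, hi', one_mul]
    calc X * (e k : Matrix ι ι ℂ) = τ * ((τ⁻¹ * X) * e k) := by
          rw [← Matrix.mul_assoc, ← hXe]
      _ = (τ * e k) * (τ⁻¹ * X) := by rw [h1, Matrix.mul_assoc]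
      _ = _ := by rw [hω, Matrix.smul_mul, Matrix.mul_assoc, ← hXe]
  · intro Z hZ X hX
    have hZA : Z ∈ A := by
      apply bicommutant A hA1 hAm hAs
      intro c hc
      have hcs := hspan (show c ∈ C from hc)
      rw [← hbspan] at hcs
      clear hc
      induction hcs using Submodule.span_induction with
      | mem x hx =>
        have := hZ (e.symm ⟨x, hx⟩)
        simp only [Equiv.apply_symm_apply] at this
        exact this
      | zero => simp
      | add x y _ _ hx hy => rw [Matrix.add_mul, hx, hy, Matrix.mul_add]
      | smul c x _ hx => rw [Matrix.smul_mul, hx, Matrix.mul_smul]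
    have := hm _ hX _ ((hA _).1 hZA)
    rwa [Matrix.mul_assoc, ← Matrix.mul_assoc τ⁻¹, hi, one_mul] at this

end Aux2


section Aux3
variable {ι : Type*} [Fintype ι] [DecidableEq ι]

lemma hom_compare {E : Type*} [NormedAddCommGroup E] [NormedSpace ℝ E] [FiniteDimensional ℝ E]
    (f g : E → ℝ) (hf : Continuous f) (hg : Continuous g)
    (hf2 : ∀ (r : ℝ) x, f (r • x) = r ^ 2 * f x) (hg2 : ∀ (r : ℝ) x, g (r • x) = r ^ 2 * g x)
    (hpos : ∀ x, x ≠ 0 → 0 < f x) : ∃ c : ℝ, 0 < c ∧ ∀ x, c * g x ≤ f x := by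
  have hcomp : IsCompact (Metric.sphere (0 : E) 1) := isCompact_sphere _ _
  obtain ⟨b, hb⟩ := hcomp.bddAbove_image hg.continuousOn
  have key : ∃ a : ℝ, 0 < a ∧ ∀ x ∈ Metric.sphere (0 : E) 1, a ≤ f x := by
    rcases (Metric.sphere (0 : E) 1).eq_empty_or_nonempty with he | hne
    · exact ⟨1, one_pos, by simp [he]⟩
    · obtain ⟨x0, hx0, hmin⟩ := hcomp.exists_isMinOn hne hf.continuousOn
      refine ⟨f x0, hpos x0 ?_, fun x hx => hmin hx⟩
      rintro rfl
      simp at hx0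
  obtain ⟨a, ha, hfa⟩ := key
  refine ⟨a / (|b| + 1), by positivity, fun x => ?_⟩
  by_cases hx : x = 0
  · have h1 := hf2 0 0
    have h2 := hg2 0 0
    simp at h1 h2
    simp [hx, h1, h2]
  have hnx : 0 < ‖x‖ := norm_pos_iff.2 hx
  set u := ‖x‖⁻¹ • x with hu
  have hus : u ∈ Metric.sphere (0 : E) 1 := by
    simp [hu, norm_smul, hnx.ne']
  have hxu : x = ‖x‖ • u := by rw [hu, smul_smul, mul_inv_cancel₀ hnx.ne', one_smul]
  rw [hxu, hf2, hg2]
  have h1 := hfa u hus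
  have h2 : g u ≤ |b| + 1 := by
    have := hb (Set.mem_image_of_mem g hus)
    have := le_abs_self b
    linarith
  have h3 : a / (|b| + 1) * g u ≤ f u := by
    refine le_trans ?_ h1
    rw [div_mul_eq_mul_div, div_le_iff₀ (by positivity)]
    exact mul_le_mul_of_nonneg_left h2 ha.le
  have := mul_le_mul_of_nonneg_left h3 (sq_nonneg ‖x‖)
  linarith

lemma mat_hom_compare (f g : Matrix ι ι ℂ → ℝ) (hf : Continuous f) (hg : Continuous g)
    (hf2 : ∀ (r : ℝ) x, f ((r : ℂ) • x) = r ^ 2 * f x)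
    (hg2 : ∀ (r : ℝ) x, g ((r : ℂ) • x) = r ^ 2 * g x)
    (hpos : ∀ x, x ≠ 0 → 0 < f x) : ∃ c : ℝ, 0 < c ∧ ∀ x, c * g x ≤ f x := by
  have hr : ∀ (r : ℝ) (x : ι → ι → ℂ), r • x = (r : ℂ) • x := by
    intro r x; ext i j; simp
  exact hom_compare (E := ι → ι → ℂ) f g hf hg (fun r x => by rw [hr]; exact hf2 r x)
    (fun r x => by rw [hr]; exact hg2 r x) hpos

lemma exp_decay (f f' : ℝ → ℝ) (c : ℝ) (hc : 0 < c) (hf0 : ∀ t, 0 ≤ f t)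
    (hd : ∀ t, HasDerivAt f (f' t) t) (hle : ∀ t, f' t ≤ - c * f t) :
    Filter.Tendsto f Filter.atTop (nhds 0) := by
  have hg : ∀ t, HasDerivAt (fun s => f s * Real.exp (c * s))
      (f' t * Real.exp (c * t) + f t * (Real.exp (c * t) * c)) t := by
    intro t
    refine (hd t).mul ?_
    have := ((hasDerivAt_id t).const_mul c).exp
    simpa using this
  have hanti : Antitone (fun s => f s * Real.exp (c * s)) := by
    apply antitone_of_deriv_nonpos
    · intro t; exact (hg t).differentiableAt
    · intro t
      rw [(hg t).deriv]
      have := mul_le_mul_of_nonneg_right (hle t) (Real.exp_pos (c * t)).le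
      nlinarith
  have hlim : Filter.Tendsto (fun t : ℝ => f 0 * Real.exp (-(c * t))) Filter.atTop (nhds 0) := by
    have h1 : Filter.Tendsto (fun t : ℝ => c * t) Filter.atTop Filter.atTop :=
      Filter.tendsto_id.const_mul_atTop hc
    have h2 := (Real.tendsto_exp_neg_atTop_nhds_zero.comp h1).const_mul (f 0)
    simpa using h2
  refine tendsto_of_tendsto_of_tendsto_of_le_of_le' tendsto_const_nhds hlim
    (Filter.Eventually.of_forall hf0) ?_
  filter_upwards [Filter.eventually_ge_atTop 0] with t ht
  have h1 := hanti ht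
  simp only [mul_zero, Real.exp_zero, mul_one] at h1
  calc f t = f t * Real.exp (c * t) * Real.exp (-(c * t)) := by
        rw [mul_assoc, ← Real.exp_add]; simp
    _ ≤ _ := mul_le_mul_of_nonneg_right h1 (Real.exp_pos _).le

lemma gas_of_form {ρ : Matrix ι ι ℂ} (hρ : ρ.PosDef) (htr : ρ.trace = 1)
    (L : Matrix ι ι ℂ →ₗ[ℂ] Matrix ι ι ℂ) (hL0 : L ρ = 0) (hLtr : ∀ X, (L X).trace = 0)
    (hneg : ∀ Z, (Zᴴ * L (ρ * Z)).trace.re ≤ 0)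
    (hker : ∀ Z, 0 ≤ (Zᴴ * L (ρ * Z)).trace.re → ∃ c : ℂ, ρ * Z = c • ρ) : IsGAS L ρ := by
  refine ⟨hL0, ?_⟩
  intro σ hσ x hx0 hx i j
  have hi := posDef_inv_mul hρ
  have hi' := posDef_mul_inv hρ
  have hHi : (ρ⁻¹)ᴴ = ρ⁻¹ := hρ.inv.isHermitian
  have hcL : Continuous L := LinearMap.continuous_of_finiteDimensional L
  let q : Matrix ι ι ℂ → ℝ := fun X => ((ρ⁻¹ * X)ᴴ * L X).trace.re
  let nr : Matrix ι ι ℂ → ℝ := fun X => ((ρ⁻¹ * X)ᴴ * X).trace.re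
  have hρX : ∀ X, ρ * (ρ⁻¹ * X) = X := fun X => by rw [← Matrix.mul_assoc, hi', one_mul]
  have hqneg : ∀ X, q X ≤ 0 := by
    intro X
    have := hneg (ρ⁻¹ * X)
    rwa [hρX] at this
  have hqker : ∀ X, 0 ≤ q X → ∃ c : ℂ, X = c • ρ := by
    intro X h
    have := hker (ρ⁻¹ * X)
    rw [hρX] at this
    exact this h
  have hnr : ∀ X, nr X = (Xᴴ * ρ⁻¹ * X).trace.re := by
    intro X; simp only [nr, Matrix.conjTranspose_mul, hHi]
  have hcq : Continuous q := by
    refine Complex.continuous_re.comp (Continuous.matrix_trace ?_)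
    exact (continuous_const.matrix_mul continuous_id).matrix_conjTranspose.matrix_mul hcL
  have hcn : Continuous nr := by
    refine Complex.continuous_re.comp (Continuous.matrix_trace ?_)
    exact (continuous_const.matrix_mul continuous_id).matrix_conjTranspose.matrix_mul continuous_id
  have hq2 : ∀ (r : ℝ) X, q ((r : ℂ) • X) = r ^ 2 * q X := by
    intro r X
    simp only [q, map_smul, Matrix.mul_smul, Matrix.conjTranspose_smul, Matrix.smul_mul, smul_smul,
      Matrix.trace_smul, smul_eq_mul]
    rw [show (r : ℂ) * star (r : ℂ) = ((r ^ 2 : ℝ) : ℂ) by simp [sq], Complex.re_ofReal_mul]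
  have hn2 : ∀ (r : ℝ) X, nr ((r : ℂ) • X) = r ^ 2 * nr X := by
    intro r X
    simp only [nr, Matrix.mul_smul, Matrix.conjTranspose_smul, Matrix.smul_mul, smul_smul,
      Matrix.trace_smul, smul_eq_mul]
    rw [show (r : ℂ) * star (r : ℂ) = ((r ^ 2 : ℝ) : ℂ) by simp [sq], Complex.re_ofReal_mul]
  obtain ⟨c, hc, hcle⟩ := mat_hom_compare (fun X => ‖X.trace‖ ^ 2 - q X) nr
    (((continuous_id.matrix_trace).norm.pow 2).sub hcq) hcn
    (by intro r X; simp only [hq2, Matrix.trace_smul, norm_smul, Complex.norm_real, mul_pow,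
          Real.norm_eq_abs, sq_abs]; ring) hn2
    (by
      intro X hX
      by_contra hcon
      have h1 := sq_nonneg ‖X.trace‖
      have h2 := hqneg X
      obtain ⟨c, rfl⟩ := hqker X (by linarith)
      have h3 : ‖(c • ρ).trace‖ ^ 2 = 0 := by linarith
      simp [htr] at h3
      exact hX (by simp [h3]))
  obtain ⟨c', hc', hcle'⟩ := mat_hom_compare nr (fun X => ‖X i j‖ ^ 2) hcn
    ((continuous_id.matrix_elem i j).norm.pow 2) hn2
    (by intro r X; simp [mul_pow])
    (by
      intro X hX
      by_contra hcon
      rw [hnr] at hcon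
      exact hX (trace_pd_eq_zero hρ.inv X (not_lt.1 hcon)))
  -- trajectory
  have htrx : ∀ t, (x t).trace = 1 := by
    have hd : ∀ t, HasDerivAt (fun s => (x s).trace) 0 t := by
      intro t
      have h1 : HasDerivAt (fun s => ∑ i, x s i i) (∑ i, L (x t) i i) t :=
        HasDerivAt.fun_sum fun i _ => hx t i i
      have h2 : ∑ i, L (x t) i i = 0 := hLtr (x t)
      rw [h2] at h1
      exact h1
    intro t
    have := is_const_of_deriv_eq_zero (fun s => (hd s).differentiableAt) (fun s => (hd s).deriv) t 0
    rw [this, hx0, hσ.2]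
  have hLy : ∀ t, L (x t - ρ) = L (x t) := by intro t; rw [map_sub, hL0, sub_zero]
  have hy : ∀ t a b, HasDerivAt (fun s => (x s - ρ) a b) (L (x t - ρ) a b) t := by
    intro t a b
    rw [hLy]
    exact (hx t a b).sub_const _
  have hw : ∀ t a b, HasDerivAt (fun s => (ρ⁻¹ * (x s - ρ)) a b) ((ρ⁻¹ * L (x t - ρ)) a b) t := by
    intro t a b
    simp only [Matrix.mul_apply]
    exact HasDerivAt.fun_sum fun k _ => (hy t k b).const_mul _
  have hN : ∀ t, HasDerivAt (fun s => nr (x s - ρ)) (2 * q (x t - ρ)) t := by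
    intro t
    have h1 : HasDerivAt (fun s => ((ρ⁻¹ * (x s - ρ))ᴴ * (x s - ρ)).trace)
        (((ρ⁻¹ * L (x t - ρ))ᴴ * (x t - ρ)).trace + ((ρ⁻¹ * (x t - ρ))ᴴ * L (x t - ρ)).trace) t := by
      simp only [Matrix.trace, Matrix.diag_apply, Matrix.mul_apply (M := (_)ᴴ), ← Finset.sum_add_distrib,
        Matrix.conjTranspose_apply]
      exact HasDerivAt.fun_sum fun a _ => HasDerivAt.fun_sum fun b _ =>
        ((hw t b a).star).mul (hy t b a)
    have h2 := (Complex.reCLM.hasFDerivAt.comp_hasDerivAt t h1)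
    have h3 : ((ρ⁻¹ * L (x t - ρ))ᴴ * (x t - ρ)).trace
        = star ((ρ⁻¹ * (x t - ρ))ᴴ * L (x t - ρ)).trace := by
      rw [← Matrix.trace_conjTranspose]
      simp only [Matrix.conjTranspose_mul, Matrix.conjTranspose_conjTranspose, hHi,
        Matrix.mul_assoc]
    rw [h3] at h2
    have h4 : Complex.reCLM (star ((ρ⁻¹ * (x t - ρ))ᴴ * L (x t - ρ)).trace
        + ((ρ⁻¹ * (x t - ρ))ᴴ * L (x t - ρ)).trace) = 2 * q (x t - ρ) := by
      simp [q, two_mul]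
    rw [h4] at h2
    exact h2
  have hdec : Filter.Tendsto (fun s => nr (x s - ρ)) Filter.atTop (nhds 0) := by
    refine exp_decay _ _ (2 * c) (by positivity) ?_ hN ?_
    · intro t; rw [hnr]; exact trace_pd_nonneg hρ.inv _
    · intro t
      have := hcle (x t - ρ)
      simp only [Matrix.trace_sub, htrx, htr, sub_self, norm_zero] at this
      linarith
  have hsq : Filter.Tendsto (fun s => ‖(x s - ρ) i j‖ ^ 2) Filter.atTop (nhds 0) := by
    have h1 := hdec.const_mul c'⁻¹
    rw [mul_zero] at h1
    refine squeeze_zero (fun s => by positivity) (fun s => ?_) h1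
    rw [inv_mul_eq_div, le_div_iff₀ hc', mul_comm]
    exact hcle' _
  have hn : Filter.Tendsto (fun s => ‖(x s - ρ) i j‖) Filter.atTop (nhds 0) := by
    have := hsq.sqrt
    simpa using this
  rw [tendsto_iff_norm_sub_tendsto_zero]
  exact hn

end Aux3


section Aux4
variable {n : ℕ} {d : Fin n → Type*} [∀ a, Fintype (d a)] [∀ a, DecidableEq (d a)]

/-- block of an operator relative to a neighborhood -/
def blk (N : Finset (Fin n)) (X : Matrix (∀ a, d a) (∀ a, d a) ℂ) (k l : nbhdCoIdx d N) :
    Matrix (nbhdIdx d N) (nbhdIdx d N) ℂ :=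
  Matrix.of fun i j => X ((splitEquiv d N).symm (i, k)) ((splitEquiv d N).symm (j, l))

variable (N : Finset (Fin n))

lemma blk_ext {X Y : Matrix (∀ a, d a) (∀ a, d a) ℂ} (h : ∀ k l, blk N X k l = blk N Y k l) :
    X = Y := by
  ext u v
  have := congrFun (congrFun (h ((splitEquiv d N) u).2 ((splitEquiv d N) v).2)
    ((splitEquiv d N) u).1) ((splitEquiv d N) v).1
  simpa [blk] using this

lemma blk_mul (X Y : Matrix (∀ a, d a) (∀ a, d a) ℂ) (k l : nbhdCoIdx d N) :
    blk N (X * Y) k l = ∑ m, blk N X k m * blk N Y m l := by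
  ext i j
  simp only [blk, Matrix.of_apply, Matrix.mul_apply, Matrix.sum_apply]
  rw [← (splitEquiv d N).symm.sum_comp, Fintype.sum_prod_type, Finset.sum_comm]

lemma blk_splitLift (A : Matrix (nbhdIdx d N) (nbhdIdx d N) ℂ)
    (B : Matrix (nbhdCoIdx d N) (nbhdCoIdx d N) ℂ) (k l : nbhdCoIdx d N) :
    blk N (splitLift d N A B) k l = B k l • A := by
  ext i j
  simp [blk, splitLift, mul_comm]

lemma blk_nbhdLift_mul (A : Matrix (nbhdIdx d N) (nbhdIdx d N) ℂ)
    (X : Matrix (∀ a, d a) (∀ a, d a) ℂ) (k l : nbhdCoIdx d N) :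
    blk N (nbhdLift d N A * X) k l = A * blk N X k l := by
  rw [blk_mul]
  simp [nbhdLift, blk_splitLift, Matrix.one_apply, Matrix.smul_mul, ite_smul, ite_mul]

lemma blk_mul_nbhdLift (A : Matrix (nbhdIdx d N) (nbhdIdx d N) ℂ)
    (X : Matrix (∀ a, d a) (∀ a, d a) ℂ) (k l : nbhdCoIdx d N) :
    blk N (X * nbhdLift d N A) k l = blk N X k l * A := by
  rw [blk_mul]
  simp [nbhdLift, blk_splitLift, Matrix.one_apply, Matrix.mul_smul, ite_smul, mul_ite]

lemma blk_smul (c : ℂ) (X : Matrix (∀ a, d a) (∀ a, d a) ℂ) (k l : nbhdCoIdx d N) :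
    blk N (c • X) k l = c • blk N X k l := rfl

lemma nbhdLift_conjTranspose (A : Matrix (nbhdIdx d N) (nbhdIdx d N) ℂ) :
    (nbhdLift d N A)ᴴ = nbhdLift d N Aᴴ := by
  ext u v
  simp only [nbhdLift, splitLift, Matrix.conjTranspose_apply, Matrix.submatrix_apply,
    Matrix.kroneckerMap_apply, Matrix.one_apply, star_mul']
  congr 1
  by_cases h : (splitEquiv d N u).2 = (splitEquiv d N v).2
  · simp [h]
  · simp [h, Ne.symm h]

lemma nbhdLift_smul (c : ℂ) (A : Matrix (nbhdIdx d N) (nbhdIdx d N) ℂ) :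
    nbhdLift d N (c • A) = c • nbhdLift d N A := by
  ext u v
  simp [nbhdLift, splitLift, mul_assoc]

lemma nbhdLift_zero : nbhdLift d N 0 = 0 := by
  ext u v
  simp [nbhdLift, splitLift]

lemma nbhdPtrace_eq (X : Matrix (∀ a, d a) (∀ a, d a) ℂ) :
    nbhdPtrace d N X = ∑ k, blk N X k k := by
  ext i j
  simp [nbhdPtrace, blk, Matrix.sum_apply]

lemma blk_mem_schmidt (ρ : Matrix (∀ a, d a) (∀ a, d a) ℂ) (k l : nbhdCoIdx d N) :
    blk N ρ k l ∈ nbhdSchmidt d N ρ := by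
  refine ⟨Matrix.single l k 1, ?_⟩
  rw [nbhdPtrace_eq]
  simp only [blk_mul, coLift, blk_splitLift, Matrix.single_apply, ite_smul, one_smul, zero_smul,
    ite_mul, one_mul, zero_mul, ite_and]
  simp

lemma ptrace_mem_schmidt (ρ : Matrix (∀ a, d a) (∀ a, d a) ℂ) :
    nbhdPtrace d N ρ ∈ nbhdSchmidt d N ρ := by
  refine ⟨1, ?_⟩
  have : coLift d N (1 : Matrix (nbhdCoIdx d N) (nbhdCoIdx d N) ℂ) = 1 := by
    apply blk_ext N
    intro k l
    rw [coLift, blk_splitLift]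
    ext i j
    simp [blk, Matrix.one_apply, ite_and]
  rw [this, one_mul]

lemma eq_sum_blk (X : Matrix (∀ a, d a) (∀ a, d a) ℂ) :
    X = ∑ k, ∑ l, splitLift d N (blk N X k l) (Matrix.single k l 1) := by
  ext u v
  simp [Matrix.sum_apply, splitLift, blk, Matrix.single_apply, ite_and]

lemma ptrace_posDef {ρ : Matrix (∀ a, d a) (∀ a, d a) ℂ} (hρ : ρ.PosDef) (hne : Nonempty (∀ a, d a)) :
    (nbhdPtrace d N ρ).PosDef := by
  rw [nbhdPtrace_eq]
  obtain ⟨u⟩ := hne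
  refine Matrix.posDef_sum ⟨(splitEquiv d N u).2, Finset.mem_univ _⟩ ?_
  intro k _
  exact hρ.submatrix (e := fun i => (splitEquiv d N).symm (i, k)) (by
    intro i j h
    simpa using h)

lemma Fdist_props {ι : Type*} [Fintype ι] [DecidableEq ι] {τ : Matrix ι ι ℂ} (hτ : τ.PosDef)
    (W : Set (Matrix ι ι ℂ)) :
    W ⊆ Fdist τ W ∧ (∀ X ∈ Fdist τ W, Xᴴ ∈ Fdist τ W) ∧
    (∀ X ∈ Fdist τ W, ∀ Y ∈ Fdist τ W, X * τ⁻¹ * Y ∈ Fdist τ W) ∧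
    (∀ X ∈ Fdist τ W, τ * X * τ⁻¹ ∈ Fdist τ W) := by
  unfold Fdist
  simp only [Submodule.mem_sInf, Set.mem_setOf_eq]
  refine ⟨?_, ?_, ?_, ?_⟩
  · intro w hw
    rw [SetLike.mem_coe, Submodule.mem_sInf]
    intro S hS; exact hS.1 hw
  · intro X hX S hS; exact hS.2.1 X (hX S hS)
  · intro X hX Y hY S hS
    rw [← mpinv_posDef hτ]
    exact hS.2.2.1 X (hX S hS) Y (hY S hS)
  · intro X hX S hS
    rw [← modular_twice hτ]
    exact hS.2.2.2 _ (hS.2.2.2 X (hX S hS))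

set_option maxHeartbeats 1000000 in
lemma exists_gen {ρ : Matrix (∀ a, d a) (∀ a, d a) ℂ} (hρ : ρ.PosDef)
    (hne : Nonempty (∀ a, d a)) :
    ∃ L : Matrix (∀ a, d a) (∀ a, d a) ℂ →ₗ[ℂ] Matrix (∀ a, d a) (∀ a, d a) ℂ,
      IsNbhdGen d N L ∧ IsDissipNbhdGen d N L ∧ (∀ X, (L X).trace = 0) ∧ L ρ = 0 ∧
      (∀ Z, (Zᴴ * L (ρ * Z)).trace.re ≤ 0) ∧
      (∀ Z, 0 ≤ (Zᴴ * L (ρ * Z)).trace.re → L (ρ * Z) = 0 ∧ ρ * Z ∈ extF d N ρ) := by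
  have hτ := ptrace_posDef N hρ hne
  obtain ⟨hW, hs, hm, hmod⟩ := Fdist_props hτ (nbhdSchmidt d N ρ)
  obtain ⟨m, K, ω, hω, hK, hcomm⟩ := exists_noise hτ _ (hW (ptrace_mem_schmidt N ρ)) hs hm hmod
  let K' : Fin (m + m) → Matrix (nbhdIdx d N) (nbhdIdx d N) ℂ :=
    Fin.append K (fun k => ((Real.sqrt (ω k)⁻¹ : ℝ) : ℂ) • (K k)ᴴ)
  let J : Fin m → Matrix (∀ a, d a) (∀ a, d a) ℂ := fun k => nbhdLift d N (K k)
  have hJ : ∀ k, ρ * J k = (ω k : ℂ) • (J k * ρ) := by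
    intro k
    apply blk_ext N
    intro p q
    rw [blk_mul_nbhdLift, blk_smul, blk_nbhdLift_mul]
    exact hK k _ (hW (blk_mem_schmidt N ρ p q))
  let L := lindbladMap (0 : Matrix (∀ a, d a) (∀ a, d a) ℂ) fun k => nbhdLift d N (K' k)
  have hL : ∀ X, L X = ∑ k, (dis (J k) X + ((ω k)⁻¹ : ℂ) • dis (J k)ᴴ X) := by
    intro X
    rw [lindblad_zero_apply, Fin.sum_univ_add, ← Finset.sum_add_distrib]
    refine Finset.sum_congr rfl fun k _ => ?_
    simp only [K', Fin.append_left, Fin.append_right, nbhdLift_smul, dis_smul,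
      ← nbhdLift_conjTranspose, J]
    congr 2
    have : Real.sqrt (ω k)⁻¹ * Real.sqrt (ω k)⁻¹ = (ω k)⁻¹ :=
      Real.mul_self_sqrt (inv_nonneg.2 (hω k).le)
    rw [RCLike.star_def, Complex.conj_ofReal, ← Complex.ofReal_mul, this, Complex.ofReal_inv]
  have hform : ∀ Z, (Zᴴ * L (ρ * Z)).trace.re
      = -∑ k, (1/2 : ℝ) * ((ω k)⁻¹ * ((J k * Z - Z * J k)ᴴ * ρ * (J k * Z - Z * J k)).trace.re
        + (((J k)ᴴ * Z - Z * (J k)ᴴ)ᴴ * ρ * ((J k)ᴴ * Z - Z * (J k)ᴴ)).trace.re) := by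
    intro Z
    rw [hL, Matrix.mul_sum, Matrix.trace_sum, Complex.re_sum, ← Finset.sum_neg_distrib]
    refine Finset.sum_congr rfl fun k _ => ?_
    rw [pair_form hρ (hω k) (hJ k)]
    rw [show -((1 : ℂ)/2) = ((-(1/2) : ℝ) : ℂ) by push_cast; ring, Complex.re_ofReal_mul,
      Complex.add_re, ← Complex.ofReal_inv, Complex.re_ofReal_mul]
    ring
  have hnn : ∀ Z k, 0 ≤ (1/2 : ℝ) *
      ((ω k)⁻¹ * ((J k * Z - Z * J k)ᴴ * ρ * (J k * Z - Z * J k)).trace.re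
        + (((J k)ᴴ * Z - Z * (J k)ᴴ)ᴴ * ρ * ((J k)ᴴ * Z - Z * (J k)ᴴ)).trace.re) := by
    intro Z k
    have h1 := trace_pd_nonneg hρ (J k * Z - Z * J k)
    have h2 := trace_pd_nonneg hρ ((J k)ᴴ * Z - Z * (J k)ᴴ)
    have h3 := inv_pos.2 (hω k)
    exact mul_nonneg (by norm_num) (add_nonneg (mul_nonneg h3.le h1) h2)
  have hzero : ∀ Z, (∀ k, J k * Z = Z * J k ∧ (J k)ᴴ * Z = Z * (J k)ᴴ) → L (ρ * Z) = 0 := by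
    intro Z hZ
    rw [hL]
    exact Finset.sum_eq_zero fun k _ => pair_zero hρ (hω k) (hJ k) (hZ k).1 (hZ k).2
  refine ⟨L, ⟨0, Matrix.isHermitian_zero, m + m, K', ?_⟩, ⟨m + m, K', rfl⟩, ?_, ?_, ?_, ?_⟩
  · rw [nbhdLift_zero]
  · intro X
    rw [hL, Matrix.trace_sum]
    exact Finset.sum_eq_zero fun k _ => by
      rw [Matrix.trace_add, Matrix.trace_smul, trace_dis, trace_dis]; simp
  · have := hzero 1 (by simp)
    rwa [mul_one] at this
  · intro Z
    rw [hform, neg_nonpos]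
    exact Finset.sum_nonneg fun k _ => hnn Z k
  · intro Z hZ
    rw [hform, neg_nonneg] at hZ
    have h0 := le_antisymm hZ (Finset.sum_nonneg fun k _ => hnn Z k)
    rw [Finset.sum_eq_zero_iff_of_nonneg fun k _ => hnn Z k] at h0
    have hc : ∀ k, J k * Z = Z * J k ∧ (J k)ᴴ * Z = Z * (J k)ᴴ := by
      intro k
      have h1 := trace_pd_nonneg hρ (J k * Z - Z * J k)
      have h2 := trace_pd_nonneg hρ ((J k)ᴴ * Z - Z * (J k)ᴴ)
      have h3 := inv_pos.2 (hω k)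
      have h4 := h0 k (Finset.mem_univ k)
      have h5 := mul_nonneg h3.le h1
      constructor
      · refine sub_eq_zero.1 (trace_pd_eq_zero hρ _ ?_)
        by_contra hcon
        have := mul_pos h3 (not_le.1 hcon)
        linarith
      · refine sub_eq_zero.1 (trace_pd_eq_zero hρ _ ?_)
        linarith
    refine ⟨hzero Z hc, ?_⟩
    have hblk : ∀ p q, blk N (ρ * Z) p q ∈ Fdist (nbhdPtrace d N ρ) (nbhdSchmidt d N ρ) := by
      intro p q
      rw [blk_mul]
      refine Submodule.sum_mem _ fun r _ => ?_
      refine hcomm _ (fun k => ?_) _ (hW (blk_mem_schmidt N ρ p r))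
      have := (hc k).1
      rw [← blk_nbhdLift_mul, ← blk_mul_nbhdLift]
      exact congrArg (fun X => blk N X r q) this
    rw [eq_sum_blk N (ρ * Z)]
    exact Submodule.sum_mem _ fun p _ => Submodule.sum_mem _ fun q _ =>
      Submodule.subset_span ⟨_, hblk p q, _, rfl⟩

end Aux4

theorem stmt11
    {n : ℕ} {d : Fin n → Type*} [∀ a, Fintype (d a)] [∀ a, DecidableEq (d a)]
    {M : ℕ} (Nb : Fin M → Finset (Fin n))
    (ρ : Matrix (∀ a, d a) (∀ a, d a) ℂ) (hρ : ρ.PosDef) (hρtr : ρ.trace = 1)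
    (h : Submodule.span ℂ {ρ} = ⨅ j, extF d (Nb j) ρ) :
    ∃ Lj : Fin M →
        (Matrix (∀ a, d a) (∀ a, d a) ℂ →ₗ[ℂ] Matrix (∀ a, d a) (∀ a, d a) ℂ),
      (∀ j, IsNbhdGen d (Nb j) (Lj j)) ∧ (∀ j, IsDissipNbhdGen d (Nb j) (Lj j)) ∧
        IsFFFamily d Lj ∧ IsGAS (∑ j, Lj j) ρ := by
  have hne : Nonempty (∀ a, d a) := by
    by_contra hcon
    rw [not_nonempty_iff] at hcon
    simp [Matrix.trace] at hρtr
  choose Lj hnb hdis htr h0 hneg hker using fun j => exists_gen (Nb j) hρ hne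
  have hsum : ∀ Z, (Zᴴ * (∑ j, Lj j) (ρ * Z)).trace.re = ∑ j, (Zᴴ * Lj j (ρ * Z)).trace.re := by
    intro Z
    rw [LinearMap.sum_apply, Matrix.mul_sum, Matrix.trace_sum, Complex.re_sum]
  have hall : ∀ Z, 0 ≤ (Zᴴ * (∑ j, Lj j) (ρ * Z)).trace.re →
      ∀ j, 0 ≤ (Zᴴ * Lj j (ρ * Z)).trace.re := by
    intro Z hZ j
    rw [hsum] at hZ
    have h1 : ∑ j, (Zᴴ * Lj j (ρ * Z)).trace.re = 0 :=
      le_antisymm (Finset.sum_nonpos fun j _ => hneg j Z) hZ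
    rw [Finset.sum_eq_zero_iff_of_nonpos fun j _ => hneg j Z] at h1
    exact (h1 j (Finset.mem_univ j)).ge
  refine ⟨Lj, hnb, hdis, ?_, ?_⟩
  · intro σ _ hσ0 j
    have hσ : σ = ρ * (ρ⁻¹ * σ) := by rw [← Matrix.mul_assoc, posDef_mul_inv hρ, one_mul]
    have := hall (ρ⁻¹ * σ) (by rw [← hσ, hσ0]; simp) j
    have := (hker j _ this).1
    rwa [← hσ] at this
  · refine gas_of_form hρ hρtr _ ?_ ?_ ?_ ?_
    · rw [LinearMap.sum_apply]
      exact Finset.sum_eq_zero fun j _ => h0 j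
    · intro X
      rw [LinearMap.sum_apply, Matrix.trace_sum]
      exact Finset.sum_eq_zero fun j _ => htr j X
    · intro Z
      rw [hsum]
      exact Finset.sum_nonpos fun j _ => hneg j Z
    · intro Z hZ
      have : ρ * Z ∈ ⨅ j, extF d (Nb j) ρ := by
        rw [Submodule.mem_iInf]
        exact fun j => (hker j Z (hall Z hZ j)).2
      rw [← h, Submodule.mem_span_singleton] at this
      obtain ⟨c, hc⟩ := this
      exact ⟨c, hc.symm⟩


end QDS
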